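/- Let q ∈ MvPolynomial (Fin n) (ZMod 2) be a quadratic form. Let e ∈ ℕ, let s be a finite set of natural numbers, and let f : ℕ → ℕ. Then q^e · (∏_{i ∈ s} (D_i q)^(f i)) · (q·(D₀ q) + D₁ q) = 0 if and only if there exist linear forms a and b with q = a² + a·b + b². (This computes the kernel of the operation α·d₂, where d₂ = ι₂·Q₀(ι₂) + Q₁(ι₂) and α is any monomial in ι₂ and the Q_i(ι₂): the kernel is exactly the subfunctor of S² generated by the quadratic form u² + uv + v², whose associated quotient is the Dickson algebra D(2).) -/

import Mathlib

open MvPolynomial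

/-- The Milnor operation `Q_i` acting on `F₂[x₁,…,xₙ]` as the `F₂`-linear derivation
with `D_i (x_j) = x_j ^ (2^(i+1))`. -/
noncomputable def milnorQ (n i : ℕ) :
    Derivation (ZMod 2) (MvPolynomial (Fin n) (ZMod 2)) (MvPolynomial (Fin n) (ZMod 2)) :=
  MvPolynomial.mkDerivation (ZMod 2) fun j => X j ^ 2 ^ (i + 1)

/-!
Since the polynomial ring is a domain, one of the factors `q`, `D_i q`, `q D₀ q + D₁ q` vanishes.
Each `D_i` sends a linear form `a` to `a ^ 2 ^ (i + 1)` (`milnorQ_linear`) and commutes with every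
partial derivative `∂ₖ` (`pderiv_milnorQ`). As `∂ₖ q` is a linear form, this gives
`∂ₖ (D_i q) = (∂ₖ q) ^ 2 ^ (i + 1)`.

If all `∂ₖ q` vanish, which is the case when `q = 0` or `D_i q = 0`, then every exponent occurring
in `q` is even, so `q` is the square of a linear form (`exists_sq_of_pderiv_eq_zero`).

Otherwise choose `k` and `j` such that `a = ∂ₖ q` and `∂ⱼ a` are nonzero, and put `b = ∂ⱼ q`.
Applying `∂ₖ` and `∂ⱼ` to `q D₀ q = D₁ q` gives `a D₀ q + q a² = a⁴` and `b D₀ q + q b² = b⁴`.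
Eliminating `D₀ q` leaves `a b (a + b) (q - (a² + a b + b²)) = 0`. Because `∂ₖ ∂ₖ = ∂ⱼ ∂ⱼ = 0` in
characteristic two, `a`, `b` and `a + b` are nonzero, so `q = a² + a b + b²`.
-/

theorem milnorQ_X (n i : ℕ) (j : Fin n) :
    milnorQ n i (X j) = X j ^ 2 ^ (i + 1) := by
  simp [milnorQ, mkDerivation_X]

theorem pderiv_X_eq_C {n : ℕ} (i j : Fin n) :
    ∃ c : ZMod 2, pderiv i (X j : MvPolynomial (Fin n) (ZMod 2)) = C c := by
  by_cases h : j = i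
  · exact ⟨1, by subst h; simp⟩
  · exact ⟨0, by rw [pderiv_X_of_ne h, C_0]⟩

theorem pderiv_milnorQ {n : ℕ} (i : ℕ) (k : Fin n) (q : MvPolynomial (Fin n) (ZMod 2)) :
    pderiv k (milnorQ n i q) = milnorQ n i (pderiv k q) := by
  have h : ⁅(pderiv k : Derivation (ZMod 2) (MvPolynomial (Fin n) (ZMod 2)) _), milnorQ n i⁆ =
      (0 : Derivation (ZMod 2) (MvPolynomial (Fin n) (ZMod 2)) (MvPolynomial (Fin n) (ZMod 2))) := by
    refine derivation_ext fun j => ?_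
    obtain ⟨c, hc⟩ := pderiv_X_eq_C k j
    have h2 : (2 : MvPolynomial (Fin n) (ZMod 2)) = 0 := CharTwo.two_eq_zero
    rw [Derivation.commutator_apply, hc, derivation_C, milnorQ_X, pderiv_pow]
    simp [pow_succ, h2]
  have := DFunLike.congr_fun h q
  simpa [Derivation.commutator_apply, sub_eq_zero] using this

theorem pderiv_comm {n : ℕ} (j k : Fin n) (q : MvPolynomial (Fin n) (ZMod 2)) :
    pderiv k (pderiv j q) = pderiv j (pderiv k q) := by
  have h : ⁅(pderiv k : Derivation (ZMod 2) (MvPolynomial (Fin n) (ZMod 2)) _), pderiv j⁆ =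
      (0 : Derivation (ZMod 2) (MvPolynomial (Fin n) (ZMod 2)) (MvPolynomial (Fin n) (ZMod 2))) := by
    refine derivation_ext fun l => ?_
    obtain ⟨c, hc⟩ := pderiv_X_eq_C k l
    obtain ⟨d, hd⟩ := pderiv_X_eq_C j l
    simp only [Derivation.commutator_apply, hc, hd, derivation_C, sub_zero, Derivation.zero_apply]
  have := DFunLike.congr_fun h q
  simpa [Derivation.commutator_apply, sub_eq_zero] using this

theorem pderiv_pderiv_self {n : ℕ} (k : Fin n) (q : MvPolynomial (Fin n) (ZMod 2)) :
    pderiv k (pderiv k q) = 0 := by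
  have h2 : (2 : MvPolynomial (Fin n) (ZMod 2)) = 0 := CharTwo.two_eq_zero
  induction q using MvPolynomial.induction_on with
  | C a => simp
  | add p q hp hq => simp [hp, hq]
  | mul_X p i hp =>
    obtain ⟨c, hc⟩ := pderiv_X_eq_C k i
    simp only [pderiv_mul, map_add, hp, hc, pderiv_C]
    linear_combination (pderiv k p * C c) * h2

theorem eq_C_of_isHomogeneous_zero {n : ℕ} {p : MvPolynomial (Fin n) (ZMod 2)}
    (hp : p.IsHomogeneous 0) : ∃ c, p = C c :=
  ⟨_, totalDegree_eq_zero_iff_eq_C.mp (Nat.le_zero.mp hp.totalDegree_le)⟩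

theorem milnorQ_linear {n : ℕ} (i : ℕ) {a : MvPolynomial (Fin n) (ZMod 2)}
    (ha : a.IsHomogeneous 1) : milnorQ n i a = a ^ 2 ^ (i + 1) := by
  have hE := ha.sum_X_mul_pderiv
  rw [one_smul] at hE
  have hc : ∀ j, ∃ c : ZMod 2, pderiv j a = C c := fun j =>
    eq_C_of_isHomogeneous_zero (by simpa using ha.pderiv (i := j))
  choose c hc using hc
  simp only [hc] at hE
  rw [← hE, sum_pow_char_pow, map_sum]
  refine Finset.sum_congr rfl fun j _ => ?_
  rw [mul_pow, ← C_pow, ZMod.pow_card_pow, mul_comm, ← smul_eq_C_mul, Derivation.map_smul, milnorQ_X,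
    smul_eq_C_mul, mul_comm]

theorem exists_pderiv_ne_zero {n : ℕ} {a : MvPolynomial (Fin n) (ZMod 2)}
    (ha : a.IsHomogeneous 1) (h0 : a ≠ 0) : ∃ j, pderiv j a ≠ 0 := by
  by_contra! h
  have hE := ha.sum_X_mul_pderiv
  simp only [h, mul_zero, Finset.sum_const_zero, one_smul] at hE
  exact h0 hE.symm

/-- A quadratic form over `F₂` with vanishing partial derivatives is the square of a linear form:
its exponents are even, and its coefficients are their own squares. -/
theorem exists_sq_of_pderiv_eq_zero {n : ℕ} {q : MvPolynomial (Fin n) (ZMod 2)}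
    (hq : q.IsHomogeneous 2) (h : ∀ k, pderiv k q = 0) :
    ∃ a : MvPolynomial (Fin n) (ZMod 2), a.IsHomogeneous 1 ∧ q = a ^ 2 := by
  have heven : ∀ d ∈ q.support, ∃ d' : Fin n →₀ ℕ, d = 2 • d' := by
    intro d hd
    refine ⟨d.mapRange (· / 2) (by simp), ?_⟩
    ext k
    simp only [Finsupp.smul_apply, Finsupp.mapRange_apply, smul_eq_mul]
    by_contra hne
    have hodd : d k % 2 = 1 := by omega
    have hle : Finsupp.single k 1 ≤ d := by
      rw [Finsupp.single_le_iff]; omega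
    have hc := congrArg (coeff (d - Finsupp.single k 1)) (h k)
    rw [coeff_pderiv, tsub_add_cancel_of_le hle, coeff_zero] at hc
    have h1 : ((d - Finsupp.single k 1 : Fin n →₀ ℕ) k + 1 : ℕ) = d k := by
      simp; omega
    have h3 : ((d k : ℕ) : ZMod 2) = 1 := by
      rw [← ZMod.natCast_mod, hodd, Nat.cast_one]
    have h4 : (((d - Finsupp.single k 1 : Fin n →₀ ℕ) k : ℕ) : ZMod 2) + 1 = 1 := by
      rw [← Nat.cast_add_one, h1, h3]
    rw [h4, mul_one] at hc
    exact mem_support_iff.mp hd hc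
  choose! g hg using heven
  refine ⟨∑ d ∈ q.support, monomial (g d) (coeff d q), ?_, ?_⟩
  · refine IsHomogeneous.sum _ _ _ fun d hd => isHomogeneous_monomial _ ?_
    have h1 : d.degree = 2 := by
      by_contra hne
      exact mem_support_iff.mp hd (hq.coeff_eq_zero hne)
    rw [hg d hd, map_nsmul, smul_eq_mul] at h1
    omega
  · rw [sum_pow_char]
    conv_lhs => rw [q.as_sum]
    refine Finset.sum_congr rfl fun d hd => ?_
    rw [monomial_pow, ZMod.pow_card, ← hg d hd]

theorem pderiv_milnorQ_quadratic {n : ℕ} {q : MvPolynomial (Fin n) (ZMod 2)}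
    (hq : q.IsHomogeneous 2) (i : ℕ) (k : Fin n) :
    pderiv k (milnorQ n i q) = (pderiv k q) ^ 2 ^ (i + 1) := by
  rw [pderiv_milnorQ, milnorQ_linear i hq.pderiv]

theorem kernel_of_alpha_d2 {n : ℕ}
    (q : MvPolynomial (Fin n) (ZMod 2)) (hq : q.IsHomogeneous 2)
    (e : ℕ) (s : Finset ℕ) (f : ℕ → ℕ) :
    q ^ e * (∏ i ∈ s, (milnorQ n i q) ^ f i) *
        (q * milnorQ n 0 q + milnorQ n 1 q) = 0 ↔
      ∃ a b : MvPolynomial (Fin n) (ZMod 2), a.IsHomogeneous 1 ∧ b.IsHomogeneous 1 ∧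
        q = a ^ 2 + a * b + b ^ 2 := by
  have h2 : (2 : MvPolynomial (Fin n) (ZMod 2)) = 0 := CharTwo.two_eq_zero
  constructor
  · intro h
    by_cases hz : ∀ k, pderiv k q = 0
    · obtain ⟨a, ha, rfl⟩ := exists_sq_of_pderiv_eq_zero hq hz
      exact ⟨a, 0, ha, isHomogeneous_zero _ _ _, by ring⟩
    push Not at hz
    obtain ⟨k, hk⟩ := hz
    have hq0 : q ≠ 0 := by
      rintro rfl
      simp at hk
    have hD : ∀ i, milnorQ n i q ≠ 0 := by
      intro i hi
      have := pderiv_milnorQ_quadratic hq i k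
      rw [hi, map_zero] at this
      exact pow_ne_zero _ hk this.symm
    have key : q * milnorQ n 0 q + milnorQ n 1 q = 0 :=
      (mul_eq_zero.mp h).resolve_left
        (mul_ne_zero (pow_ne_zero _ hq0)
          (Finset.prod_ne_zero_iff.mpr fun i _ => pow_ne_zero _ (hD i)))
    have hder : ∀ l, pderiv l q * milnorQ n 0 q + q * pderiv l q ^ 2 + pderiv l q ^ 4 = 0 := by
      intro l
      have := congrArg (pderiv l) key
      rw [map_add, pderiv_mul, pderiv_milnorQ_quadratic hq, pderiv_milnorQ_quadratic hq,
        map_zero] at this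
      simpa using this
    obtain ⟨j, hj⟩ := exists_pderiv_ne_zero hq.pderiv hk
    have hb : pderiv j q ≠ 0 := by
      intro hb
      rw [pderiv_comm, hb, map_zero] at hj
      exact hj rfl
    have hab : pderiv k q + pderiv j q ≠ 0 := by
      intro hab
      have := congrArg (pderiv j) hab
      rw [map_add, pderiv_pderiv_self, add_zero, map_zero] at this
      exact hj this
    have ha1 := hder k
    have hb1 := hder j
    refine ⟨pderiv k q, pderiv j q, hq.pderiv, hq.pderiv, ?_⟩
    generalize pderiv k q = a at *
    generalize pderiv j q = b at *
    have hprod : a * b * (a + b) * (q - (a ^ 2 + a * b + b ^ 2)) = 0 := by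
      linear_combination b * ha1 + a * hb1 - a * b * (milnorQ n 0) q * h2
        - (a ^ 4 * b + a ^ 3 * b ^ 2 + a ^ 2 * b ^ 3 + a * b ^ 4) * h2
    exact sub_eq_zero.mp
      ((mul_eq_zero.mp hprod).resolve_left (mul_ne_zero (mul_ne_zero hk hb) hab))
  · rintro ⟨a, b, ha, hb, rfl⟩
    have hD : ∀ i, milnorQ n i (a ^ 2 + a * b + b ^ 2) =
        a * b ^ 2 ^ (i + 1) + b * a ^ 2 ^ (i + 1) := by
      intro i
      simp only [map_add, Derivation.leibniz, pow_two, milnorQ_linear i ha, milnorQ_linear i hb,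
        smul_eq_mul]
      linear_combination (a * a ^ 2 ^ (i + 1) + b * b ^ 2 ^ (i + 1)) * h2
    rw [hD 0, hD 1]
    refine mul_eq_zero_of_right _ ?_
    norm_num
    linear_combination (a ^ 4 * b + a ^ 3 * b ^ 2 + a ^ 2 * b ^ 3 + a * b ^ 4) * h2
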